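/- arXiv:2205.12738 — 4 statements merged into one kernel-verified Lean document; each statement's English description precedes it below -/
import Mathlib

section
/- (Cover analogue of the Singleton bound) Let C be a k-dimensional F_q-linear subspace of F_q^{m×n} whose minimum cover distance is d (i.e., d = min{wt_C(A) : A ∈ C, A ≠ 0}). Then k ≤ max{n,m}·(min{n,m} − d + 1). -/
/-!
Suppose that every nonzero codeword has cover weight greater than `r + t`. A codeword vanishing
outside a fixed set of `r` rows and `t` columns is covered by these `r + t` lines, so it is zero.
Deleting these lines is therefore injective on the code and embeds it into the space of
`(m - r) × (n - t)` matrices. For the Singleton bound, all `d - 1` deleted lines are taken in the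
direction in which there are `min m n` lines.
-/

/-- A cover of a matrix `A` is a set of lines (rows, encoded as `Sum.inl`, and
columns, encoded as `Sum.inr`) such that every nonzero entry of `A` lies in one
of these lines. -/
def IsCover {F : Type*} [Field F] {m n : ℕ} (A : Matrix (Fin m) (Fin n) F)
    (S : Finset (Fin m ⊕ Fin n)) : Prop :=
  ∀ i j, A i j ≠ 0 → Sum.inl i ∈ S ∨ Sum.inr j ∈ S

/-- The cover weight of a matrix: the minimum cardinality of a cover. -/
noncomputable def coverWt {F : Type*} [Field F] {m n : ℕ}
    (A : Matrix (Fin m) (Fin n) F) : ℕ :=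
  sInf {c | ∃ S : Finset (Fin m ⊕ Fin n), IsCover A S ∧ S.card = c}

theorem finrank_le_card_mul_card_of_submatrix {R m n m' n' : Type*} [Ring R]
    [StrongRankCondition R] [Fintype m'] [Fintype n'] (C : Submodule R (Matrix m n R))
    (f : m' → m) (g : n' → n) (h : ∀ A ∈ C, A.submatrix f g = 0 → A = 0) :
    Module.finrank R C ≤ Fintype.card m' * Fintype.card n' := by
  let restrict : C →ₗ[R] Matrix m' n' R :=
    { toFun := fun A => A.1.submatrix f g
      map_add' := fun _ _ => rfl
      map_smul' := fun _ _ => rfl }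
  have restrict_injective : Function.Injective restrict :=
    (injective_iff_map_eq_zero restrict).2 fun A hA => Subtype.ext (h A.1 A.2 hA)
  simpa only [Module.finrank_matrix, Module.finrank_self, mul_one]
    using LinearMap.finrank_le_finrank_of_injective restrict_injective

section CoverWeight

variable {F : Type*} [Field F] {m n : ℕ} {A : Matrix (Fin m) (Fin n) F}

theorem isCover_empty_iff : IsCover A ∅ ↔ A = 0 := by
  simp [IsCover, ← Matrix.ext_iff]

theorem isCover_disjSum_iff_submatrix_compl_eq_zero {R : Finset (Fin m)} {T : Finset (Fin n)} :
    IsCover A (R.disjSum T) ↔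
      A.submatrix (Subtype.val : ↥Rᶜ → Fin m) (Subtype.val : ↥Tᶜ → Fin n) = 0 := by
  simp only [IsCover, Finset.inl_mem_disjSum, Finset.inr_mem_disjSum, ← Matrix.ext_iff,
    Matrix.submatrix_apply, Matrix.zero_apply, Subtype.forall, Finset.mem_compl]
  grind

theorem coverWt_le_card {S : Finset (Fin m ⊕ Fin n)} (hS : IsCover A S) : coverWt A ≤ S.card :=
  Nat.sInf_le ⟨S, hS, rfl⟩

theorem exists_isCover_card_eq_coverWt (A : Matrix (Fin m) (Fin n) F) :
    ∃ S, IsCover A S ∧ S.card = coverWt A :=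
  Nat.sInf_mem (s := {c | ∃ S : Finset (Fin m ⊕ Fin n), IsCover A S ∧ S.card = c})
    ⟨_, Finset.univ, fun _ _ _ => Or.inl (Finset.mem_univ _), rfl⟩

theorem coverWt_pos (hA : A ≠ 0) : 0 < coverWt A := by
  obtain ⟨S, hS, hcard⟩ := exists_isCover_card_eq_coverWt A
  rw [← hcard, Finset.card_pos, Finset.nonempty_iff_ne_empty]
  rintro rfl
  exact hA (isCover_empty_iff.1 hS)

theorem coverWt_le_min (A : Matrix (Fin m) (Fin n) F) : coverWt A ≤ min n m := by
  have hrows : IsCover A (Finset.univ.disjSum ∅) := fun i j _ => by simp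
  have hcols : IsCover A (Finset.disjSum ∅ Finset.univ) := fun i j _ => by simp
  exact le_min (by simpa using coverWt_le_card hcols) (by simpa using coverWt_le_card hrows)

end CoverWeight

section Puncturing

variable {F : Type*} [Field F] {m n : ℕ} (C : Submodule F (Matrix (Fin m) (Fin n) F))

theorem finrank_le_card_compl_mul_card_compl (R : Finset (Fin m)) (T : Finset (Fin n))
    (h : ∀ A ∈ C, IsCover A (R.disjSum T) → A = 0) :
    Module.finrank F C ≤ Rᶜ.card * Tᶜ.card := by
  simpa only [Fintype.card_coe] using
    finrank_le_card_mul_card_of_submatrix C (Subtype.val : ↥Rᶜ → Fin m) (Subtype.val : ↥Tᶜ → Fin n)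
      fun A hA hzero => h A hA (isCover_disjSum_iff_submatrix_compl_eq_zero.2 hzero)

theorem finrank_le_sub_mul_sub_of_add_lt_coverWt (r t : ℕ)
    (h : ∀ A ∈ C, A ≠ 0 → r + t < coverWt A) :
    Module.finrank F C ≤ (m - r) * (n - t) := by
  let R : Finset (Fin m) := {i | i < r}
  let T : Finset (Fin n) := {j | j < t}
  have hR : R.card = min m r := Fin.card_filter_val_lt
  have hT : T.card = min n t := Fin.card_filter_val_lt
  have hcover : ∀ A ∈ C, IsCover A (R.disjSum T) → A = 0 := by
    intro A hA hA_cover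
    by_contra hA0
    have hle : coverWt A ≤ R.card + T.card :=
      (coverWt_le_card hA_cover).trans_eq (Finset.card_disjSum R T)
    have hlt : r + t < coverWt A := h A hA hA0
    omega
  have hRc : Rᶜ.card = m - r := by rw [Finset.card_compl, Fintype.card_fin]; omega
  have hTc : Tᶜ.card = n - t := by rw [Finset.card_compl, Fintype.card_fin]; omega
  simpa only [hRc, hTc] using finrank_le_card_compl_mul_card_compl C R T hcover

theorem finrank_le_max_mul_min_sub_of_lt_coverWt {r : ℕ}
    (h : ∀ A ∈ C, A ≠ 0 → r < coverWt A) :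
    Module.finrank F C ≤ max n m * (min n m - r) := by
  rcases le_total m n with hmn | hnm
  · rw [max_eq_left hmn, min_eq_right hmn, mul_comm]
    exact finrank_le_sub_mul_sub_of_add_lt_coverWt C r 0 h
  · rw [max_eq_right hnm, min_eq_left hnm]
    exact finrank_le_sub_mul_sub_of_add_lt_coverWt C 0 r (by simpa only [zero_add] using h)

end Puncturing

theorem cover_singleton_bound_general {F : Type*} [Field F] {m n k d : ℕ}
    (C : Submodule F (Matrix (Fin m) (Fin n) F))
    (hk : Module.finrank F C = k)
    (hd : IsLeast {w | ∃ A ∈ C, A ≠ (0 : Matrix (Fin m) (Fin n) F) ∧ coverWt A = w} d) :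
    (k : ℤ) ≤ max n m * (min n m - d + 1) := by
  obtain ⟨⟨A, -, hA0, hAd⟩, hmin⟩ := hd
  have hd_pos : 0 < d := hAd ▸ coverWt_pos hA0
  have hd_le : d ≤ min n m := hAd ▸ coverWt_le_min A
  have hlt : ∀ B ∈ C, B ≠ 0 → d - 1 < coverWt B := fun B hB hB0 =>
    Nat.sub_one_lt_of_le hd_pos (hmin ⟨B, hB, hB0, rfl⟩)
  calc (k : ℤ) ≤ ((max n m * (min n m - (d - 1)) : ℕ) : ℤ) := by
        exact_mod_cast hk ▸ finrank_le_max_mul_min_sub_of_lt_coverWt C hlt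
    _ = max n m * (min n m - d + 1) := by
        rw [tsub_tsub_assoc hd_le hd_pos]
        push_cast [hd_le]
        ring

/-- Cover analogue of the Singleton bound: if `C ⊆ F_q^{m×n}` is a `k`-dimensional
linear code of minimum cover distance `d`, then
`k ≤ max{n,m}·(min{n,m} − d + 1)`. -/
theorem cover_singleton_bound {F : Type*} [Field F] [Fintype F] {q m n k d : ℕ}
    (hq : Fintype.card F = q)
    (C : Submodule F (Matrix (Fin m) (Fin n) F))
    (hk : Module.finrank F C = k)
    (hd : IsLeast {w | ∃ A ∈ C, A ≠ (0 : Matrix (Fin m) (Fin n) F) ∧ coverWt A = w} d) :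
    (k : ℤ) ≤ max n m * (min n m - d + 1) :=
  cover_singleton_bound_general C hk hd
end

section
/- Let q be a prime power, δ ∈ (0,1], and let m = m(n) be a sequence of positive integers with n ≤ m(n) for all n. Then lim_{n→∞} (1/(n·m(n)))·log_q V_C(n, m(n), q, ⌊δ·n⌋) = δ. Consequently the asymptotic Gilbert–Varshamov bound liminf_{n→∞} R(n, m(n), ⌊δn⌋, q) ≥ 1 − δ holds, where R(n,m,d,q) = (1/(nm))·log_q A(q,m,n,d). -/
/-- `maxCode F m n d` is `A(q,m,n,d)`: the largest size of a subset of
`F_q^{m×n}` in which any two distinct elements have cover distance at least `d`. -/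
noncomputable def maxCode (F : Type*) [Field F] [Fintype F] (m n d : ℕ) : ℕ :=
  sSup {c | ∃ S : Finset (Matrix (Fin m) (Fin n) F),
    (∀ A ∈ S, ∀ B ∈ S, A ≠ B → d ≤ coverWt (A - B)) ∧ S.card = c}

/-!
The matrices covered by a fixed set of lines form a coordinate subspace. Choosing `d` full columns
gives `q ^ (d * m)` matrices of cover weight at most `d`; conversely there are at most
`2 ^ (m + n)` sets of lines, and `d` lines contain at most `d * max m n` cells, so a ball of radius
`d` has at most `q ^ (m + n + d * max m n)` elements. For `n ≤ m` and `d = ⌊δ n⌋` both exponents are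
`δ n m + o(n m)`. The balls of radius `d` around the words of a largest code of minimum distance
`d + 1` exhaust the space, so the rate of the code is at least one minus that of the ball.
-/

section CoveredCells

variable {m n : ℕ}

/-- The cells of an `m × n` matrix lying on a line, with rows encoded as `Sum.inl` and columns as
`Sum.inr`; the cells covered by a set `S` of lines are `S.biUnion lineCells`. -/
def lineCells : Fin m ⊕ Fin n → Finset (Fin m × Fin n)
  | .inl i => {i} ×ˢ Finset.univ
  | .inr j => Finset.univ ×ˢ {j}

lemma mem_biUnion_lineCells {S : Finset (Fin m ⊕ Fin n)} {i : Fin m} {j : Fin n} :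
    (i, j) ∈ S.biUnion lineCells ↔ .inl i ∈ S ∨ .inr j ∈ S := by
  simp [lineCells]

lemma card_lineCells_le (l : Fin m ⊕ Fin n) : (lineCells l).card ≤ max m n := by
  cases l <;> simp [lineCells]

lemma card_biUnion_lineCells_le (S : Finset (Fin m ⊕ Fin n)) :
    (S.biUnion lineCells).card ≤ S.card * max m n :=
  Finset.card_biUnion_le_card_mul _ _ _ fun l _ => card_lineCells_le l

lemma card_biUnion_lineCells_map_inr (T : Finset (Fin n)) :
    ((T.map (.inr : Fin n ↪ Fin m ⊕ Fin n)).biUnion lineCells).card = T.card * m := by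
  have hcells : (T.map (.inr : Fin n ↪ Fin m ⊕ Fin n)).biUnion lineCells = Finset.univ ×ˢ T := by
    ext ⟨i, j⟩
    rw [mem_biUnion_lineCells]
    simp
  rw [hcells, Finset.card_product, Finset.card_fin, mul_comm]

end CoveredCells

section CoverWeight

variable {F : Type*} [Field F] {m n : ℕ}

lemma isCover_iff_forall_notMem {A : Matrix (Fin m) (Fin n) F} {S : Finset (Fin m ⊕ Fin n)} :
    IsCover A S ↔ ∀ i j, (i, j) ∉ S.biUnion lineCells → A i j = 0 :=
  forall₂_congr fun _ _ => by
    rw [mem_biUnion_lineCells]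
    exact not_imp_comm

lemma IsCover.coverWt_le {A : Matrix (Fin m) (Fin n) F} {S : Finset (Fin m ⊕ Fin n)}
    (hS : IsCover A S) : coverWt A ≤ S.card :=
  Nat.sInf_le ⟨S, hS, rfl⟩

lemma coverWt_le_iff {A : Matrix (Fin m) (Fin n) F} {d : ℕ} :
    coverWt A ≤ d ↔ ∃ S : Finset (Fin m ⊕ Fin n), S.card ≤ d ∧ IsCover A S := by
  constructor
  · intro hA
    have hcovers : {c | ∃ S : Finset (Fin m ⊕ Fin n), IsCover A S ∧ S.card = c}.Nonempty :=
      ⟨_, Finset.univ, fun _ _ _ => .inl (Finset.mem_univ _), rfl⟩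
    obtain ⟨S, hS, hcard⟩ := Nat.sInf_mem hcovers
    exact ⟨S, hcard.trans_le hA, hS⟩
  · rintro ⟨S, hcard, hS⟩
    exact hS.coverWt_le.trans hcard

lemma coverWt_zero : coverWt (0 : Matrix (Fin m) (Fin n) F) = 0 :=
  Nat.le_zero.mp (coverWt_le_iff.mpr ⟨∅, le_rfl, fun _ _ h => absurd rfl h⟩)

lemma coverWt_neg (A : Matrix (Fin m) (Fin n) F) : coverWt (-A) = coverWt A := by
  simp [coverWt, IsCover]

lemma coverWt_sub_comm (A B : Matrix (Fin m) (Fin n) F) :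
    coverWt (A - B) = coverWt (B - A) := by
  rw [← coverWt_neg, neg_sub]

end CoverWeight

section CoverBall

variable {F : Type*} [Field F] {m n : ℕ}

lemma ncard_setOf_isCover [Fintype F] (S : Finset (Fin m ⊕ Fin n)) :
    {A : Matrix (Fin m) (Fin n) F | IsCover A S}.ncard =
      Fintype.card F ^ (S.biUnion lineCells).card := by
  let restrict : {A : Matrix (Fin m) (Fin n) F | IsCover A S} ≃ (S.biUnion lineCells → F) :=
    { toFun A p := A.1 p.1.1 p.1.2
      invFun f := ⟨.of fun i j => if h : (i, j) ∈ S.biUnion lineCells then f ⟨(i, j), h⟩ else 0,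
        isCover_iff_forall_notMem.mpr fun _ _ h => dif_neg h⟩
      left_inv A := by
        ext i j
        by_cases h : (i, j) ∈ S.biUnion lineCells
        · exact dif_pos h
        · exact (dif_neg h).trans (isCover_iff_forall_notMem.mp A.2 i j h).symm
      right_inv f := funext fun p => dif_pos p.2 }
  rw [← Nat.card_coe_set_eq, Nat.card_congr restrict, Nat.card_fun, Nat.card_eq_fintype_card,
    Nat.card_eq_fintype_card, Fintype.card_coe]

variable (F m n) in
/-- The ball of radius `d` about the zero matrix in the cover metric; its cardinality is
`V_C(n,m,q,d)`. -/
def coverBall (d : ℕ) : Set (Matrix (Fin m) (Fin n) F) :=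
  {A | coverWt A ≤ d}

lemma coverBall_eq_biUnion (d : ℕ) :
    coverBall F m n d =
      ⋃ S ∈ ({S | S.card ≤ d} : Finset (Finset (Fin m ⊕ Fin n))), {A | IsCover A S} := by
  ext A
  simp [coverBall, coverWt_le_iff]

lemma ncard_coverBall_pos [Finite F] (d : ℕ) : 0 < (coverBall F m n d).ncard :=
  (Set.ncard_pos).mpr ⟨0, coverWt_zero.trans_le d.zero_le⟩

variable [Fintype F]

lemma ncard_coverBall_le (d : ℕ) :
    (coverBall F m n d).ncard ≤ Fintype.card F ^ (m + n + d * max m n) := by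
  have hq : 1 < Fintype.card F := Fintype.one_lt_card
  let P : Finset (Finset (Fin m ⊕ Fin n)) := {S | S.card ≤ d}
  have hP : P.card ≤ Fintype.card F ^ (m + n) := calc
    P.card ≤ 2 ^ (m + n) := by simpa using P.card_le_univ
    _ ≤ Fintype.card F ^ (m + n) := Nat.pow_le_pow_left hq _
  calc (coverBall F m n d).ncard
      ≤ ∑ S ∈ P, {A : Matrix (Fin m) (Fin n) F | IsCover A S}.ncard := by
        rw [coverBall_eq_biUnion]
        exact P.set_ncard_biUnion_le _
    _ ≤ P.card * Fintype.card F ^ (d * max m n) := by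
        refine Finset.sum_le_card_nsmul _ _ _ fun S hS => ?_
        rw [ncard_setOf_isCover]
        exact Nat.pow_le_pow_right hq.le ((card_biUnion_lineCells_le S).trans
          (Nat.mul_le_mul_right _ (Finset.mem_filter.mp hS).2))
    _ ≤ Fintype.card F ^ (m + n) * Fintype.card F ^ (d * max m n) := Nat.mul_le_mul_right _ hP
    _ = Fintype.card F ^ (m + n + d * max m n) := (pow_add _ _ _).symm

lemma pow_le_ncard_coverBall {d : ℕ} (hd : d ≤ n) :
    Fintype.card F ^ (d * m) ≤ (coverBall F m n d).ncard := by
  obtain ⟨T, -, hT⟩ := Finset.exists_subset_card_eq (hd.trans_eq (Finset.card_fin n).symm)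
  rw [← hT, ← card_biUnion_lineCells_map_inr, ← ncard_setOf_isCover]
  exact Set.ncard_le_ncard fun A hA => coverWt_le_iff.mpr ⟨_, (Finset.card_map _).le, hA⟩

end CoverBall

section Codes

variable {F : Type*} [Field F] {m n d : ℕ}

/-- A code of minimum cover distance at least `d`; `maxCode F m n d` is the largest size of one. -/
def IsCoverCode (d : ℕ) (C : Finset (Matrix (Fin m) (Fin n) F)) : Prop :=
  ∀ A ∈ C, ∀ B ∈ C, A ≠ B → d ≤ coverWt (A - B)

lemma IsCoverCode.insert [DecidableEq F] {C : Finset (Matrix (Fin m) (Fin n) F)}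
    (hC : IsCoverCode d C) {B : Matrix (Fin m) (Fin n) F} (hB : ∀ A ∈ C, d ≤ coverWt (B - A)) :
    IsCoverCode d (insert B C) := by
  intro X hX Y hY hXY
  rcases Finset.mem_insert.mp hX with rfl | hXC <;> rcases Finset.mem_insert.mp hY with rfl | hYC
  · exact absurd rfl hXY
  · exact hB Y hYC
  · exact coverWt_sub_comm X Y ▸ hB X hXC
  · exact hC X hXC Y hYC hXY

lemma bddAbove_card_isCoverCode (F : Type*) [Field F] [Finite F] (m n d : ℕ) :
    BddAbove {c | ∃ C : Finset (Matrix (Fin m) (Fin n) F), IsCoverCode d C ∧ C.card = c} := by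
  refine ⟨Nat.card (Matrix (Fin m) (Fin n) F), ?_⟩
  rintro _ ⟨C, -, rfl⟩
  exact Set.ncard_coe_finset C ▸ Set.ncard_le_card _

lemma natCard_matrix_fin (F : Type*) [Fintype F] (m n : ℕ) :
    Nat.card (Matrix (Fin m) (Fin n) F) = Fintype.card F ^ (n * m) := by
  simp [Matrix, pow_mul]

variable [Fintype F]

lemma IsCoverCode.card_le_maxCode {C : Finset (Matrix (Fin m) (Fin n) F)}
    (hC : IsCoverCode d C) : C.card ≤ maxCode F m n d :=
  le_csSup (bddAbove_card_isCoverCode F m n d) ⟨C, hC, rfl⟩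

lemma exists_isCoverCode_card_eq_maxCode (F : Type*) [Field F] [Fintype F] (m n d : ℕ) :
    ∃ C : Finset (Matrix (Fin m) (Fin n) F), IsCoverCode d C ∧ C.card = maxCode F m n d :=
  have hcodes : {c | ∃ C : Finset (Matrix (Fin m) (Fin n) F),
      IsCoverCode d C ∧ C.card = c}.Nonempty :=
    ⟨0, ∅, by simp [IsCoverCode], rfl⟩
  Nat.sSup_mem hcodes (bddAbove_card_isCoverCode F m n d)

lemma maxCode_le_pow : maxCode F m n d ≤ Fintype.card F ^ (n * m) := by
  obtain ⟨C, -, hC⟩ := exists_isCoverCode_card_eq_maxCode F m n d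
  rw [← hC, ← natCard_matrix_fin, ← Set.ncard_coe_finset]
  exact Set.ncard_le_card _

lemma maxCode_antitone : Antitone (maxCode F m n) := by
  intro d e hde
  obtain ⟨C, hC, hcard⟩ := exists_isCoverCode_card_eq_maxCode F m n e
  exact hcard ▸ IsCoverCode.card_le_maxCode fun A hA B hB hAB => hde.trans (hC A hA B hB hAB)

lemma IsCoverCode.exists_sub_mem_coverBall {C : Finset (Matrix (Fin m) (Fin n) F)}
    (hC : IsCoverCode (d + 1) C) (hmax : C.card = maxCode F m n (d + 1))
    (B : Matrix (Fin m) (Fin n) F) : ∃ A ∈ C, B - A ∈ coverBall F m n d := by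
  classical
  by_contra! hfar
  have hB : B ∉ C := fun h => hfar B h (by simp [coverBall, coverWt_zero])
  have hins := (hC.insert fun A hA => Nat.lt_of_not_le (hfar A hA)).card_le_maxCode
  rw [Finset.card_insert_of_notMem hB, hmax] at hins
  exact Nat.not_succ_le_self _ hins

lemma pow_le_maxCode_mul_ncard_coverBall (F : Type*) [Field F] [Fintype F] (m n d : ℕ) :
    Fintype.card F ^ (n * m) ≤ maxCode F m n (d + 1) * (coverBall F m n d).ncard := by
  obtain ⟨C, hC, hmax⟩ := exists_isCoverCode_card_eq_maxCode F m n (d + 1)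
  have hsurj : Function.Surjective fun p : C × coverBall F m n d => p.1.1 + p.2.1 := fun B =>
    let ⟨A, hA, hAB⟩ := hC.exists_sub_mem_coverBall hmax B
    ⟨(⟨A, hA⟩, ⟨B - A, hAB⟩), add_sub_cancel A B⟩
  have hcard := Nat.card_le_card_of_surjective _ hsurj
  rwa [natCard_matrix_fin, Nat.card_prod, Nat.card_eq_fintype_card, Fintype.card_coe, hmax,
    Nat.card_coe_set_eq] at hcard

lemma maxCode_pos (F : Type*) [Field F] [Fintype F] (m n d : ℕ) : 0 < maxCode F m n d :=
  (IsCoverCode.card_le_maxCode (C := {0}) (by simp [IsCoverCode])).trans_lt' (by simp)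

end Codes

section Rate

variable {q m n x y : ℕ}

/-- The information rate `log_q x / (n m)` of a set of `x` matrices of size `m × n` over a field
with `q` elements; it is `0` when `n m = 0`. -/
noncomputable def rate (q m n x : ℕ) : ℝ :=
  1 / ((n : ℝ) * m) * Real.logb q x

lemma rate_mono (hq : 1 < q) (hx : 0 < x) (hxy : x ≤ y) : rate q m n x ≤ rate q m n y := by
  have hlog : Real.logb q x ≤ Real.logb q y :=
    Real.logb_le_logb_of_le (mod_cast hq) (mod_cast hx) (mod_cast hxy)
  exact mul_le_mul_of_nonneg_left hlog (by positivity)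

lemma rate_mul (hx : x ≠ 0) (hy : y ≠ 0) :
    rate q m n (x * y) = rate q m n x + rate q m n y := by
  rw [rate, Nat.cast_mul, Real.logb_mul (mod_cast hx) (mod_cast hy), mul_add, rate, rate]

lemma rate_pow (hq : 1 < q) (k : ℕ) : rate q m n (q ^ k) = k / ((n : ℝ) * m) := by
  rw [rate, Nat.cast_pow, Real.logb_pow, Real.logb_self_eq_one (mod_cast hq), mul_one,
    one_div_mul_eq_div]

variable {F : Type*} [Field F] [Fintype F] {d : ℕ}

lemma div_le_rate_ncard_coverBall (hm : m ≠ 0) (hd : d ≤ n) :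
    (d : ℝ) / n ≤ rate (Fintype.card F) m n (coverBall F m n d).ncard := by
  have hm' : (m : ℝ) ≠ 0 := mod_cast hm
  calc (d : ℝ) / n = rate (Fintype.card F) m n (Fintype.card F ^ (d * m)) := by
        rw [rate_pow Fintype.one_lt_card, Nat.cast_mul, mul_div_mul_right _ _ hm']
    _ ≤ rate (Fintype.card F) m n (coverBall F m n d).ncard :=
        rate_mono Fintype.one_lt_card (pow_pos Fintype.card_pos _) (pow_le_ncard_coverBall hd)

lemma rate_ncard_coverBall_le (hn : n ≠ 0) (hnm : n ≤ m) :
    rate (Fintype.card F) m n (coverBall F m n d).ncard ≤ 2 / n + d / n := by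
  have hn' : (0 : ℝ) < n := mod_cast Nat.pos_of_ne_zero hn
  have hnm' : (n : ℝ) ≤ m := mod_cast hnm
  have hm' : (0 : ℝ) < m := hn'.trans_le hnm'
  calc rate (Fintype.card F) m n (coverBall F m n d).ncard
      ≤ rate (Fintype.card F) m n (Fintype.card F ^ (m + n + d * max m n)) :=
        rate_mono Fintype.one_lt_card (ncard_coverBall_pos d) (ncard_coverBall_le d)
    _ = (m + n + d * m) / (n * m) := by
        rw [rate_pow Fintype.one_lt_card, max_eq_left hnm]
        push_cast
        rfl
    _ ≤ (m + m + d * m) / (n * m) := by gcongr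
    _ = 2 / n + d / n := by
        field_simp
        ring

lemma rate_maxCode_le_one : rate (Fintype.card F) m n (maxCode F m n d) ≤ 1 :=
  calc rate (Fintype.card F) m n (maxCode F m n d)
      ≤ rate (Fintype.card F) m n (Fintype.card F ^ (n * m)) :=
        rate_mono Fintype.one_lt_card (maxCode_pos F m n d) maxCode_le_pow
    _ ≤ 1 := by
        rw [rate_pow Fintype.one_lt_card, Nat.cast_mul]
        exact div_self_le_one _

lemma one_le_rate_maxCode_add_rate_ncard_coverBall (hm : m ≠ 0) (hn : n ≠ 0) :
    1 ≤ rate (Fintype.card F) m n (maxCode F m n (d + 1)) +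
      rate (Fintype.card F) m n (coverBall F m n d).ncard := by
  have hnm : (n : ℝ) * m ≠ 0 := mod_cast mul_ne_zero hn hm
  rw [← rate_mul (maxCode_pos F m n _).ne' (ncard_coverBall_pos d).ne']
  calc (1 : ℝ) = rate (Fintype.card F) m n (Fintype.card F ^ (n * m)) := by
        rw [rate_pow Fintype.one_lt_card, Nat.cast_mul, div_self hnm]
    _ ≤ rate (Fintype.card F) m n (maxCode F m n (d + 1) * (coverBall F m n d).ncard) :=
        rate_mono Fintype.one_lt_card (pow_pos Fintype.card_pos _)
          (pow_le_maxCode_mul_ncard_coverBall F m n d)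

lemma one_sub_le_rate_maxCode (hn : n ≠ 0) (hnm : n ≤ m) :
    1 - (2 / n + d / n) ≤ rate (Fintype.card F) m n (maxCode F m n d) := by
  have hm : m ≠ 0 := (Nat.pos_of_ne_zero hn |>.trans_le hnm).ne'
  have hball := rate_ncard_coverBall_le (F := F) (d := d) hn hnm
  have hGV := one_le_rate_maxCode_add_rate_ncard_coverBall (F := F) (d := d) hm hn
  have hanti : rate (Fintype.card F) m n (maxCode F m n (d + 1)) ≤
      rate (Fintype.card F) m n (maxCode F m n d) :=
    rate_mono Fintype.one_lt_card (maxCode_pos F m n _) (maxCode_antitone d.le_succ)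
  linarith

end Rate

section Asymptotics

open Filter Topology

variable {F : Type*} [Field F] [Fintype F] {δ : ℝ} {m : ℕ → ℕ}

lemma tendsto_natFloor_mul_div_natCast (hδ : 0 ≤ δ) :
    Tendsto (fun n : ℕ => (⌊δ * n⌋₊ : ℝ) / n) atTop (𝓝 δ) :=
  (tendsto_nat_floor_mul_div_atTop hδ).comp tendsto_natCast_atTop_atTop

lemma tendsto_two_div_add_natFloor_mul_div_natCast (hδ : 0 ≤ δ) :
    Tendsto (fun n : ℕ => (2 : ℝ) / n + (⌊δ * n⌋₊ : ℝ) / n) atTop (𝓝 δ) := by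
  simpa using (tendsto_const_div_atTop_nhds_zero_nat (2 : ℝ)).add
    (tendsto_natFloor_mul_div_natCast hδ)

theorem tendsto_rate_ncard_coverBall (hδ0 : 0 ≤ δ) (hδ1 : δ ≤ 1) (hm : ∀ᶠ n in atTop, n ≤ m n) :
    Tendsto (fun n => rate (Fintype.card F) (m n) n (coverBall F (m n) n ⌊δ * n⌋₊).ncard)
      atTop (𝓝 δ) := by
  refine tendsto_of_tendsto_of_tendsto_of_le_of_le' (tendsto_natFloor_mul_div_natCast hδ0)
    (tendsto_two_div_add_natFloor_mul_div_natCast hδ0) ?_ ?_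
  · filter_upwards [hm, eventually_gt_atTop 0] with n hnm hn
    have hfloor : ⌊δ * n⌋₊ ≤ n :=
      Nat.floor_le_of_le (mul_le_of_le_one_left n.cast_nonneg hδ1)
    exact div_le_rate_ncard_coverBall (hn.trans_le hnm).ne' hfloor
  · filter_upwards [hm, eventually_ne_atTop 0] with n hnm hn
    exact rate_ncard_coverBall_le hn hnm

theorem one_sub_le_liminf_rate_maxCode (hδ : 0 ≤ δ) (hm : ∀ᶠ n in atTop, n ≤ m n) :
    1 - δ ≤ liminf (fun n => rate (Fintype.card F) (m n) n (maxCode F (m n) n ⌊δ * n⌋₊))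
      atTop := by
  have hlower := (tendsto_two_div_add_natFloor_mul_div_natCast hδ).const_sub 1
  rw [← hlower.liminf_eq]
  refine liminf_le_liminf ?_ hlower.isBoundedUnder_ge
    (isBoundedUnder_of ⟨1, fun _ => rate_maxCode_le_one⟩).isCoboundedUnder_ge
  filter_upwards [hm, eventually_ne_atTop 0] with n hnm hn
  exact one_sub_le_rate_maxCode hn hnm

end Asymptotics

/-- Asymptotics of the cover-ball size, `(1/(nm))·log_q V_C(n,m,q,⌊δn⌋) → δ`,
and the asymptotic Gilbert–Varshamov bound
`liminf_{n→∞} R(n, m(n), ⌊δn⌋, q) ≥ 1 − δ`, where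
`R(n,m,d,q) = (1/(nm))·log_q A(q,m,n,d)`. -/
theorem asymptotic_gilbert_varshamov {F : Type*} [Field F] [Fintype F] {q : ℕ}
    (hq : Fintype.card F = q) (δ : ℝ) (hδ0 : 0 < δ) (hδ1 : δ ≤ 1)
    (m : ℕ → ℕ) (hm : ∀ n, n ≤ m n) :
    Filter.Tendsto
      (fun n : ℕ => (1 / ((n : ℝ) * m n)) *
        Real.logb q
          (Nat.card {A : Matrix (Fin (m n)) (Fin n) F | coverWt A ≤ ⌊δ * n⌋₊}))
      Filter.atTop (nhds δ) ∧
    (1 - δ) ≤ Filter.liminf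
      (fun n : ℕ => (1 / ((n : ℝ) * m n)) *
        Real.logb q (maxCode F (m n) n ⌊δ * n⌋₊))
      Filter.atTop := by
  subst hq
  have hm' := Filter.Eventually.of_forall (f := Filter.atTop) hm
  exact ⟨tendsto_rate_ncard_coverBall hδ0.le hδ1 hm', one_sub_le_liminf_rate_maxCode hδ0.le hm'⟩
end

section
/- Let q be a prime power and t ≤ min{n,m} a positive integer. Then the number F_C(n,m,q,t) of matrices in F_q^{m×n} of cover weight exactly t satisfies F_C(n,m,q,t) ≥ Σ_{t_x+t_y=t} C(m,t_x)·C(n,t_y)·q^{t_x·t_y}·(q^{n−t_y} − (q−1)(n−t) − q^{t_x})^{t_x}·(q^{m−t_x} − (q−1)(m−t) − q^{t_y})^{t_y}, where the sum ranges over nonnegative integers t_x, t_y with t_x + t_y = t and C(a,b) denotes a binomial coefficient. -/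
/-!
Count pairs of a matrix and a cover `(X, Y)` of it such that the supports of the rows in `X`
outside `Y`, and of the columns in `Y` outside `X`, satisfy Hall's condition with one element to
spare. Such a cover is strictly smaller than every other cover, so a matrix has at most one of them
and its cover weight is then `|X| + |Y|`. The block `X × Y` of the matrix is arbitrary, and the
rows and the columns can be chosen independently of each other, one vector at a time.

Suppose `k` rows in `F_q ^ n` have been chosen. By submodularity of the size of the union of
supports, two tight sets of rows whose unions meet have a tight union, so the maximal tight sets
have disjoint unions. A new row is forbidden only if it is zero, has weight one, or is supported in
the union of a maximal tight set. The latter unions together with the remaining singletons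
partition the coordinates, so counting forbidden vectors block by block and using superadditivity
of the number of vectors of weight at least two leaves at least
`heavyCount q n - heavyCount q (k + 1)` choices.
-/

open Finset Function Matrix

/-- A family of sets `N` has positive surplus if it satisfies Hall's condition with one element to
spare: any `s > 0` of the sets have more than `s` elements in their union. It is applied to the
supports of the rows, or of the columns, of a matrix. -/
def HasPositiveSurplus {κ ι : Type*} (N : κ → Set ι) : Prop :=
  ∀ S : Finset κ, S.Nonempty → #S < (⋃ i ∈ S, N i).ncard

/-- A nonempty set of indices attaining the minimal surplus one that `HasPositiveSurplus` allows. -/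
def IsTight {κ ι : Type*} (N : κ → Set ι) (S : Finset κ) : Prop :=
  S.Nonempty ∧ (⋃ i ∈ S, N i).ncard = #S + 1

/-- The number of vectors of Hamming weight at least two in `F_q ^ k`, as a polynomial in `q`. The
factors `q ^ (n - t_y) - (q - 1) (n - t) - q ^ t_x` of the sphere bound are differences
`heavyCount q (n - t_y) - heavyCount q t_x`. -/
def heavyCount (q : ℤ) (k : ℕ) : ℤ :=
  q ^ k - (q - 1) * k - 1

/-- A pair of a set `X` of rows and a set `Y` of columns covering the matrix `A`, such that the
rows in `X` outside `Y`, as well as the columns in `Y` outside `X`, have positive surplus. This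
makes `(X, Y)` the only cover of minimum size. -/
structure IsRigidCover {α β F : Type*} [Zero F] (A : Matrix α β F) (X : Finset α) (Y : Finset β) :
    Prop where
  covers : ∀ i j, A i j ≠ 0 → i ∈ X ∨ j ∈ Y
  rows : HasPositiveSurplus fun i => support (A.toBlock (· ∈ X) (· ∉ Y) i)
  cols : HasPositiveSurplus fun j => support (Aᵀ.toBlock (· ∈ Y) (· ∉ X) j)

section Counting

theorem ncard_biUnion_of_pairwiseDisjoint {α γ : Type*} [Finite α] {I : Finset γ} {D : γ → Set α}
    (hD : (I : Set γ).PairwiseDisjoint D) : (⋃ i ∈ I, D i).ncard = ∑ i ∈ I, (D i).ncard := by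
  rw [← finsum_mem_coe_finset]
  exact I.finite_toSet.ncard_biUnion (fun _ _ => Set.toFinite _) hD

theorem sum_card_card_eq_sum_antidiagonal {α β M : Type*} [Fintype α] [Fintype β]
    [AddCommMonoid M] (g : ℕ → ℕ → M) (t : ℕ) :
    ∑ p : Finset α × Finset β with #p.1 + #p.2 = t, g #p.1 #p.2 =
      ∑ ab ∈ antidiagonal t,
        ((Fintype.card α).choose ab.1 * (Fintype.card β).choose ab.2) • g ab.1 ab.2 := by
  rw [← sum_fiberwise_of_maps_to (t := antidiagonal t) (g := fun p => (#p.1, #p.2)) (by simp)]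
  refine sum_congr rfl fun ab hab => ?_
  have hfiber : ({p | #p.1 + #p.2 = t} : Finset (Finset α × Finset β)).filter
      (fun p => (#p.1, #p.2) = ab) = powersetCard ab.1 univ ×ˢ powersetCard ab.2 univ := by
    ext p
    simp only [mem_filter, mem_univ, true_and, mem_product, mem_powersetCard, subset_univ,
      Prod.ext_iff, and_iff_right_iff_imp]
    rintro ⟨h₁, h₂⟩
    rw [h₁, h₂, mem_antidiagonal.1 hab]
  rw [hfiber, sum_congr rfl (g := fun _ => g ab.1 ab.2) fun p hp => ?_, sum_const, card_product,
    card_powersetCard, card_powersetCard, card_univ, card_univ]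
  simp only [mem_product, mem_powersetCard] at hp
  rw [hp.1.2, hp.2.2]

variable {ι F : Type*} [Finite ι] [Zero F]

theorem ncard_setOf_support_subset (D : Set ι) :
    {v : ι → F | support v ⊆ D}.ncard = Nat.card F ^ D.ncard := by
  have hrange : {v : ι → F | support v ⊆ D} =
      Set.range fun w : D → F => extend Subtype.val w (0 : ι → F) := by
    ext v
    refine ⟨fun hv => ⟨fun j => v j, ?_⟩, ?_⟩
    · funext j
      dsimp only
      by_cases hj : j ∈ D
      · exact Subtype.val_injective.extend_apply _ _ (⟨j, hj⟩ : D)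
      · rw [extend_apply' _ _ _ (by simpa using hj), support_subset_iff'.1 hv j hj, Pi.zero_apply]
    · rintro ⟨w, rfl⟩
      refine support_subset_iff'.2 fun j hj => ?_
      dsimp only
      rw [extend_apply' _ _ _ (by simpa using hj), Pi.zero_apply]
  rw [hrange, Set.ncard_range_of_injective (extend_injective Subtype.val_injective _),
    Nat.card_fun, Nat.card_coe_set_eq]

theorem ncard_insert_zero_biUnion_support_subset_le [Finite F] {γ : Type*}
    (I : Finset γ) (D : γ → Set ι) :
    ((insert 0 (⋃ i ∈ I, {v : ι → F | support v ⊆ D i})).ncard : ℤ) ≤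
      1 + ∑ i ∈ I, ((Nat.card F : ℤ) ^ (D i).ncard - 1) := by
  have hnonzero (i : γ) : (({v : ι → F | support v ⊆ D i} \ {0}).ncard : ℤ) =
      (Nat.card F : ℤ) ^ (D i).ncard - 1 := by
    have h := Set.ncard_sdiff_singleton_add_one
      (show (0 : ι → F) ∈ {v : ι → F | support v ⊆ D i} by simp)
    rw [ncard_setOf_support_subset] at h
    exact eq_sub_of_add_eq (mod_cast h)
  have hsplit : insert 0 (⋃ i ∈ I, {v : ι → F | support v ⊆ D i}) =
      insert 0 (⋃ i ∈ I, {v : ι → F | support v ⊆ D i} \ {0}) := by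
    simp only [← Set.iUnion_sdiff, Set.insert_sdiff_singleton]
  have h := (Set.ncard_insert_le 0 (⋃ i ∈ I, {v : ι → F | support v ⊆ D i} \ {0})).trans
    (Nat.add_le_add_right (I.set_ncard_biUnion_le _) 1)
  rw [hsplit, ← sum_congr rfl fun i _ => hnonzero i, add_comm]
  exact_mod_cast h

end Counting

section HeavyCount

variable {q : ℤ}

theorem heavyCount_mono (hq : 1 ≤ q) : Monotone (heavyCount q) := by
  refine monotone_nat_of_le_succ fun k => ?_
  have h : 0 ≤ (q - 1) * (q ^ k - 1) :=
    mul_nonneg (sub_nonneg.2 hq) (sub_nonneg.2 (one_le_pow₀ hq))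
  unfold heavyCount
  push_cast
  linarith [pow_succ q k]

theorem heavyCount_add_heavyCount_le (hq : 1 ≤ q) (a b : ℕ) :
    heavyCount q (a + 1) + heavyCount q (b + 1) ≤ heavyCount q (a + b + 1) := by
  have h : 0 ≤ q * ((q ^ a - 1) * (q ^ b - 1)) :=
    mul_nonneg (by linarith) (mul_nonneg (sub_nonneg.2 (one_le_pow₀ hq))
      (sub_nonneg.2 (one_le_pow₀ hq)))
  unfold heavyCount
  push_cast
  linear_combination h

theorem sum_heavyCount_succ_le (hq : 1 ≤ q) {γ : Type*} (I : Finset γ) (s : γ → ℕ) :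
    ∑ i ∈ I, heavyCount q (s i + 1) ≤ heavyCount q (∑ i ∈ I, s i + 1) := by
  have h := le_sum_of_subadditive (fun a => -heavyCount q (a + 1)) (by simp [heavyCount])
    (fun a b => by linarith [heavyCount_add_heavyCount_le hq a b]) I s
  rw [sum_neg_distrib] at h
  exact neg_le_neg_iff.1 h

end HeavyCount

section Surplus

variable {κ ι : Type*} {N : κ → Set ι}

theorem HasPositiveSurplus.comp_injective {κ' : Type*} (hN : HasPositiveSurplus N) {e : κ' → κ}
    (he : Injective e) : HasPositiveSurplus (N ∘ e) := by
  intro S hS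
  simpa using hN (S.map ⟨e, he⟩) (hS.map)

theorem HasPositiveSurplus.optionElim (hN : HasPositiveSurplus N) {V : Set ι}
    (hV : ∀ S : Finset κ, #S + 1 < (V ∪ ⋃ i ∈ S, N i).ncard) :
    HasPositiveSurplus fun o : Option κ => o.elim V N := by
  classical
  intro S hS
  by_cases hnone : none ∈ S
  · obtain ⟨S, rfl⟩ : ∃ S', S = insertNone S' :=
      ⟨S.eraseNone, by rw [insertNone_eraseNone, insert_eq_of_mem hnone]⟩
    simpa [Set.iUnion_option] using hV S
  · obtain ⟨S, rfl⟩ : ∃ S', S = S'.map .some :=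
      ⟨S.eraseNone, by rw [map_some_eraseNone, erase_eq_of_notMem hnone]⟩
    simpa using hN S (map_nonempty.1 hS)

theorem HasPositiveSurplus.nonempty (hN : HasPositiveSurplus N) (i : κ) : (N i).Nonempty := by
  have h := hN {i} (singleton_nonempty i)
  rw [set_biUnion_singleton] at h
  exact Set.nonempty_of_ncard_ne_zero (Nat.ne_zero_of_lt h)

theorem sum_card_le_of_pairwiseDisjoint_biUnion [Finite κ] (hN : ∀ i, (N i).Nonempty)
    {T : Finset (Finset κ)} (hT : (T : Set (Finset κ)).PairwiseDisjoint fun S => ⋃ i ∈ S, N i) :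
    ∑ S ∈ T, #S ≤ Nat.card κ := by
  classical
  have := Fintype.ofFinite κ
  have hdisj : (T : Set (Finset κ)).PairwiseDisjoint id := by
    intro S hS S' hS' hne
    refine Finset.disjoint_left.2 fun i hi hi' => ?_
    obtain ⟨j, hj⟩ := hN i
    exact Set.disjoint_left.1 (hT hS hS' hne) (Set.mem_biUnion hi hj) (Set.mem_biUnion hi' hj)
  calc ∑ S ∈ T, #S = #(T.biUnion id) := (card_biUnion hdisj).symm
    _ ≤ Fintype.card κ := card_le_univ _
    _ = Nat.card κ := Nat.card_eq_fintype_card.symm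

variable [Finite ι]

theorem IsTight.union [DecidableEq κ] (hN : HasPositiveSurplus N) {S T : Finset κ}
    (hS : IsTight N S) (hT : IsTight N T) (hST : ¬Disjoint (⋃ i ∈ S, N i) (⋃ i ∈ T, N i)) :
    IsTight N (S ∪ T) := by
  have hinter : #(S ∩ T) < ((⋃ i ∈ S, N i) ∩ ⋃ i ∈ T, N i).ncard := by
    rcases (S ∩ T).eq_empty_or_nonempty with hempty | hne
    · rw [hempty, card_empty, Set.ncard_pos]
      exact Set.not_disjoint_iff_nonempty_inter.1 hST
    · refine (hN _ hne).trans_le (Set.ncard_le_ncard (Set.subset_inter ?_ ?_))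
      · exact Set.biUnion_subset_biUnion_left fun _ => mem_of_mem_inter_left
      · exact Set.biUnion_subset_biUnion_left fun _ => mem_of_mem_inter_right
  have hne : (S ∪ T).Nonempty := hS.1.mono subset_union_left
  have hunion := hN _ hne
  have hcard := Set.ncard_union_add_ncard_inter (⋃ i ∈ S, N i) (⋃ i ∈ T, N i)
  rw [← set_biUnion_union, hS.2, hT.2] at hcard
  have hindex := card_union_add_card_inter S T
  exact ⟨hne, by omega⟩

theorem HasPositiveSurplus.pairwiseDisjoint_biUnion_maximal_isTight (hN : HasPositiveSurplus N) :
    {S | Maximal (IsTight N) S}.PairwiseDisjoint fun S => ⋃ i ∈ S, N i := by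
  classical
  intro S hS T hT hne
  by_contra hST
  have hunion := hS.prop.union hN hT.prop hST
  exact hne ((hS.eq_of_le hunion subset_union_left).trans
    (hT.eq_of_le hunion subset_union_right).symm)

theorem HasPositiveSurplus.ncard_le_one_or_exists_maximal_isTight [Finite κ]
    (hN : HasPositiveSurplus N) {V : Set ι}
    (hV : ¬HasPositiveSurplus fun o : Option κ => o.elim V N) :
    V.ncard ≤ 1 ∨ ∃ S, Maximal (IsTight N) S ∧ V ⊆ ⋃ i ∈ S, N i := by
  obtain ⟨S, hS⟩ : ∃ S : Finset κ, (V ∪ ⋃ i ∈ S, N i).ncard ≤ #S + 1 := by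
    by_contra! h
    exact hV (hN.optionElim h)
  rcases S.eq_empty_or_nonempty with rfl | hne
  · exact Or.inl (by simpa using hS)
  have hlt := hN S hne
  have hsub : ⋃ i ∈ S, N i ⊆ V ∪ ⋃ i ∈ S, N i := Set.subset_union_right
  have heq := Set.eq_of_subset_of_ncard_le hsub (by omega)
  rw [← heq] at hS
  obtain ⟨S', hSS', hS'⟩ := Finite.exists_le_maximal (p := IsTight N) (a := S) ⟨hne, by omega⟩
  exact Or.inr ⟨S', hS', (Set.union_eq_right.1 heq.symm).trans
    (Set.biUnion_subset_biUnion_left hSS')⟩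

theorem HasPositiveSurplus.exists_tight_blocks [Finite κ] (hN : HasPositiveSurplus N) :
    ∃ (T : Finset (Finset κ)) (U : Finset ι), (∀ S ∈ T, IsTight N S) ∧ ∑ S ∈ T, #S ≤ Nat.card κ ∧
      ∑ S ∈ T, (#S + 1) + #U = Nat.card ι ∧
      ∀ V, ¬HasPositiveSurplus (fun o : Option κ => o.elim V N) → V.Nonempty →
        (∃ S ∈ T, V ⊆ ⋃ i ∈ S, N i) ∨ ∃ j ∈ U, V ⊆ {j} := by
  classical
  let T : Finset (Finset κ) := (Set.toFinite {S | Maximal (IsTight N) S}).toFinset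
  let U : Finset ι := (Set.toFinite (⋃ S ∈ T, ⋃ i ∈ S, N i)ᶜ).toFinset
  have hT {S} : S ∈ T ↔ Maximal (IsTight N) S := by simp [T]
  have hdisj : (T : Set (Finset κ)).PairwiseDisjoint fun S => ⋃ i ∈ S, N i := by
    simpa [T] using hN.pairwiseDisjoint_biUnion_maximal_isTight
  refine ⟨T, U, fun S hS => (hT.1 hS).prop,
    sum_card_le_of_pairwiseDisjoint_biUnion hN.nonempty hdisj, ?_, fun V hV hne => ?_⟩
  · have hunion := ncard_biUnion_of_pairwiseDisjoint hdisj
    rw [sum_congr rfl fun S hS => (hT.1 hS).prop.2] at hunion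
    rw [← hunion, ← Set.ncard_eq_toFinset_card, Set.ncard_add_ncard_compl]
  rcases hN.ncard_le_one_or_exists_maximal_isTight hV with hone | ⟨S, hS, hVS⟩
  · obtain ⟨j, rfl⟩ := Set.ncard_eq_one.1 (hone.antisymm ((Set.ncard_pos).2 hne))
    by_cases hj : j ∈ ⋃ S ∈ T, ⋃ i ∈ S, N i
    · obtain ⟨S, hS, hjS⟩ := Set.mem_iUnion₂.1 hj
      exact Or.inl ⟨S, hS, Set.singleton_subset_iff.2 hjS⟩
    · exact Or.inr ⟨j, by simpa [U] using hj, subset_rfl⟩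
  · exact Or.inl ⟨S, hT.2 hS, hVS⟩

variable {F : Type*} [Zero F] [Finite F]

theorem HasPositiveSurplus.ncard_nonextensions_le [Finite κ] (hN : HasPositiveSurplus N) :
    ({v : ι → F | ¬HasPositiveSurplus fun o : Option κ => o.elim (support v) N}.ncard : ℤ) ≤
      (Nat.card F : ℤ) ^ Nat.card ι - heavyCount (Nat.card F) (Nat.card ι) +
        heavyCount (Nat.card F) (Nat.card κ + 1) := by
  obtain ⟨T, U, hT, hcardT, hcardU, hblock⟩ := hN.exists_tight_blocks
  set bad := {v : ι → F | ¬HasPositiveSurplus fun o : Option κ => o.elim (support v) N}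
  let block : Finset κ ⊕ ι → Set ι := Sum.elim (fun S => ⋃ i ∈ S, N i) ({·})
  have hbad : bad ⊆ insert 0 (⋃ b ∈ T.disjSum U, {v : ι → F | support v ⊆ block b}) := by
    intro v hv
    rcases eq_or_ne v 0 with rfl | hv0
    · exact Set.mem_insert _ _
    refine Set.mem_insert_of_mem _ (Set.mem_iUnion₂.2 ?_)
    rcases hblock _ hv (support_nonempty_iff.2 hv0) with ⟨S, hS, h⟩ | ⟨j, hj, h⟩
    · exact ⟨.inl S, inl_mem_disjSum.2 hS, h⟩
    · exact ⟨.inr j, inr_mem_disjSum.2 hj, h⟩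
  have hF : (1 : ℤ) ≤ Nat.card F := by exact_mod_cast Nat.card_pos
  have hheavy : ∑ S ∈ T, heavyCount (Nat.card F) (#S + 1) ≤
      heavyCount (Nat.card F) (Nat.card κ + 1) :=
    (sum_heavyCount_succ_le hF T card).trans (heavyCount_mono hF (by omega))
  calc (bad.ncard : ℤ)
      ≤ 1 + ∑ b ∈ T.disjSum U, ((Nat.card F : ℤ) ^ (block b).ncard - 1) :=
        (Nat.cast_le.2 (Set.ncard_le_ncard hbad)).trans
          (ncard_insert_zero_biUnion_support_subset_le _ block)
    _ = 1 + (∑ S ∈ T, ((Nat.card F : ℤ) ^ (#S + 1) - 1) + #U * ((Nat.card F : ℤ) - 1)) := by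
        have htight (S) (hS : S ∈ T) : (block (.inl S)).ncard = #S + 1 := (hT S hS).2
        rw [sum_disjSum, sum_congr rfl fun S hS => by rw [htight S hS]]
        simp [block, mul_sub]
    _ = 1 + Nat.card ι * ((Nat.card F : ℤ) - 1) +
          ∑ S ∈ T, heavyCount (Nat.card F) (#S + 1) := by
        simp only [heavyCount, ← hcardU, sum_sub_distrib, ← mul_sum]
        push_cast
        ring
    _ ≤ _ := by
        simp only [heavyCount] at hheavy ⊢
        linarith

theorem HasPositiveSurplus.heavyCount_sub_le_ncard_extensions [Finite κ]
    (hN : HasPositiveSurplus N) :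
    heavyCount (Nat.card F) (Nat.card ι) - heavyCount (Nat.card F) (Nat.card κ + 1) ≤
      {v : ι → F | HasPositiveSurplus fun o : Option κ => o.elim (support v) N}.ncard := by
  have hbad := hN.ncard_nonextensions_le (F := F)
  have htotal := Set.ncard_add_ncard_compl
    {v : ι → F | HasPositiveSurplus fun o : Option κ => o.elim (support v) N}
  rw [Set.compl_ofPred, Nat.card_fun] at htotal
  zify at htotal
  linarith

theorem mul_ncard_hasPositiveSurplus_le (κ : Type*) [Finite κ] :
    (heavyCount (Nat.card F) (Nat.card ι) - heavyCount (Nat.card F) (Nat.card κ + 1)) *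
        {M : Matrix κ ι F | HasPositiveSurplus fun i => support (M i)}.ncard ≤
      {M : Matrix (Option κ) ι F | HasPositiveSurplus fun i => support (M i)}.ncard := by
  set good := {M : Matrix κ ι F | HasPositiveSurplus fun i => support (M i)}
  let append (M : Matrix κ ι F) (v : ι → F) : Matrix (Option κ) ι F := fun o => o.elim v M
  have happend_inj (M) : Injective (append M) := fun v w h => congrFun h none
  let extensions (M : Matrix κ ι F) : Set (Matrix (Option κ) ι F) := append M ''
    {v | HasPositiveSurplus fun o : Option κ => o.elim (support v) fun i => support (M i)}
  have hdisj : (good.toFinite.toFinset : Set (Matrix κ ι F)).PairwiseDisjoint extensions := by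
    refine fun M _ M' _ hne => Set.disjoint_left.2 ?_
    rintro _ ⟨v, -, rfl⟩ ⟨w, -, h⟩
    exact hne (funext fun i => congrFun h.symm (some i))
  have hsub : ⋃ M ∈ good.toFinite.toFinset, extensions M ⊆
      {M : Matrix (Option κ) ι F | HasPositiveSurplus fun i => support (M i)} := by
    refine Set.iUnion₂_subset fun M _ => ?_
    rintro _ ⟨v, hv, rfl⟩
    have hsupport : (fun o => support (append M v o)) =
        fun o => o.elim (support v) fun i => support (M i) := by
      funext o
      cases o <;> rfl
    exact (congrArg HasPositiveSurplus hsupport).mpr hv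
  have hle := Set.ncard_le_ncard hsub
  rw [ncard_biUnion_of_pairwiseDisjoint hdisj] at hle
  refine le_trans ?_ (Nat.cast_le.2 hle)
  rw [mul_comm, ← nsmul_eq_mul, Set.ncard_eq_toFinset_card good, Nat.cast_sum]
  refine card_nsmul_le_sum _ _ _ fun M hM => ?_
  rw [Set.ncard_image_of_injective _ (happend_inj M)]
  exact ((good.toFinite.mem_toFinset).1 hM).heavyCount_sub_le_ncard_extensions

theorem pow_le_ncard_hasPositiveSurplus {k : ℕ} (hk : k ≤ Nat.card ι) (κ : Type*) [Finite κ]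
    (hκ : Nat.card κ ≤ k) :
    (heavyCount (Nat.card F) (Nat.card ι) - heavyCount (Nat.card F) k) ^ Nat.card κ ≤
      ({M : Matrix κ ι F | HasPositiveSurplus fun i => support (M i)}.ncard : ℤ) := by
  have hmono := heavyCount_mono (q := Nat.card F) (mod_cast Nat.card_pos)
  induction κ using Finite.induction_empty_option with
  | @of_equiv κ κ' e ih =>
    have hcongr : {M : Matrix κ ι F | HasPositiveSurplus fun i => support (M i)}.ncard =
        {M : Matrix κ' ι F | HasPositiveSurplus fun i => support (M i)}.ncard :=
      Set.ncard_congr (fun M _ => M.submatrix e.symm id)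
        (fun M hM => hM.comp_injective e.symm.injective)
        (fun M M' _ _ h => e.symm.surjective.injective_comp_right h)
        (fun M hM => ⟨M.submatrix e id, hM.comp_injective e.injective, by simp⟩)
    rw [← Nat.card_congr e] at hκ ⊢
    exact hcongr ▸ ih hκ
  | h_empty =>
    have hempty : (0 : Matrix PEmpty ι F) ∈
        {M : Matrix PEmpty ι F | HasPositiveSurplus fun i => support (M i)} :=
      fun _ ⟨i, _⟩ => i.elim
    rw [Nat.card_of_isEmpty (α := PEmpty), pow_zero]
    exact_mod_cast (Set.ncard_pos).2 ⟨_, hempty⟩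
  | @h_option κ _ ih =>
    rw [Finite.card_option] at hκ ⊢
    rw [pow_succ']
    refine le_trans ?_ (mul_ncard_hasPositiveSurplus_le κ)
    have hbase := sub_nonneg.2 (hmono hk)
    have hstep := sub_le_sub_left (hmono hκ) (heavyCount (Nat.card F) (Nat.card ι))
    exact mul_le_mul hstep (ih (by omega)) (pow_nonneg hbase _) (hbase.trans hstep)

end Surplus

section RigidCover

variable {α β F : Type*} [Zero F] {A : Matrix α β F} {X X' : Finset α} {Y Y' : Finset β}

theorem IsRigidCover.transpose (h : IsRigidCover A X Y) : IsRigidCover Aᵀ Y X :=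
  ⟨fun j i hij => (h.covers i j hij).symm, h.cols, h.rows⟩

theorem IsRigidCover.sdiff_eq_empty_or_card_lt [DecidableEq α] [DecidableEq β]
    (h : IsRigidCover A X Y) (h' : ∀ i j, A i j ≠ 0 → i ∈ X' ∨ j ∈ Y') :
    X \ X' = ∅ ∨ #(X \ X') < #(Y' \ Y) := by
  refine (X \ X').eq_empty_or_nonempty.imp_right fun hne => ?_
  have hX : ∀ i ∈ X \ X', i ∈ X := fun i hi => (mem_sdiff.1 hi).1
  have hcard : #((X \ X').subtype (· ∈ X)) = #(X \ X') := by
    rw [card_subtype, filter_true_of_mem hX]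
  have hsurplus := h.rows ((X \ X').subtype (· ∈ X)) (card_pos.1 (hcard ▸ hne.card_pos))
  rw [hcard] at hsurplus
  refine hsurplus.trans_le ?_
  rw [← Set.ncard_image_of_injective _ Subtype.val_injective, ← Set.ncard_coe_finset]
  refine Set.ncard_le_ncard ?_
  rintro _ ⟨j, hj, rfl⟩
  obtain ⟨i, hi, hij⟩ := Set.mem_iUnion₂.1 hj
  have hiX' : i.1 ∉ X' := (mem_sdiff.1 (mem_subtype.1 hi)).2
  exact mem_coe.2 (mem_sdiff.2 ⟨(h' _ _ hij).resolve_left hiX', j.2⟩)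

theorem IsRigidCover.eq_or_card_add_card_lt (h : IsRigidCover A X Y)
    (h' : ∀ i j, A i j ≠ 0 → i ∈ X' ∨ j ∈ Y') : (X = X' ∧ Y = Y') ∨ #X + #Y < #X' + #Y' := by
  classical
  have hrows := h.sdiff_eq_empty_or_card_lt h'
  have hcols := h.transpose.sdiff_eq_empty_or_card_lt fun j i hij => (h' i j hij).symm
  have hX := card_sdiff_add_card X X'
  have hX' := card_sdiff_add_card X' X
  have hY := card_sdiff_add_card Y Y'
  have hY' := card_sdiff_add_card Y' Y
  rw [union_comm] at hX' hY'
  rw [← card_eq_zero] at hrows hcols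
  refine or_iff_not_imp_right.2 fun hlt => ?_
  have hXX' : #(X \ X') = 0 := by omega
  have hX'X : #(X' \ X) = 0 := by omega
  have hYY' : #(Y \ Y') = 0 := by omega
  have hY'Y : #(Y' \ Y) = 0 := by omega
  simp only [card_eq_zero, sdiff_eq_empty_iff_subset] at hXX' hX'X hYY' hY'Y
  exact ⟨hXX'.antisymm hX'X, hYY'.antisymm hY'Y⟩

theorem IsRigidCover.coverWt_eq {F : Type*} [Field F] {m n : ℕ} {A : Matrix (Fin m) (Fin n) F}
    {X : Finset (Fin m)} {Y : Finset (Fin n)} (h : IsRigidCover A X Y) :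
    coverWt A = #X + #Y := by
  refine IsLeast.csInf_eq ⟨⟨X.disjSum Y, fun i j hij => ?_, card_disjSum _ _⟩, ?_⟩
  · simpa using h.covers i j hij
  · rintro _ ⟨S, hS, rfl⟩
    rw [← S.card_toLeft_add_card_toRight]
    rcases h.eq_or_card_add_card_lt (X' := S.toLeft) (Y' := S.toRight)
      fun i j hij => by simpa using hS i j hij with ⟨hX, hY⟩ | hlt
    · rw [← hX, ← hY]
    · exact hlt.le

theorem card_pow_mul_ncard_mul_ncard_le_ncard_isRigidCover [Finite α] [Finite β] [Finite F]
    (X : Finset α) (Y : Finset β) :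
    Nat.card F ^ (#X * #Y) *
        {R : Matrix X {j // j ∉ Y} F | HasPositiveSurplus fun i => support (R i)}.ncard *
        {C : Matrix Y {i // i ∉ X} F | HasPositiveSurplus fun j => support (C j)}.ncard ≤
      {A : Matrix α β F | IsRigidCover A X Y}.ncard := by
  classical
  let glue (p : (Matrix X Y F × Matrix X {j // j ∉ Y} F) × Matrix Y {i // i ∉ X} F) :
      Matrix α β F :=
    reindex (.sumCompl (· ∈ X)) (.sumCompl (· ∈ Y)) (fromBlocks p.1.1 p.1.2 p.2ᵀ 0)
  have hglue : Injective glue := by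
    rintro ⟨⟨B, R⟩, C⟩ ⟨⟨B', R'⟩, C'⟩ h
    obtain ⟨rfl, rfl, hC, -⟩ := fromBlocks_inj.1 ((reindex _ _).injective h)
    obtain rfl := transpose_injective hC
    rfl
  have hmaps : Set.MapsTo glue ((Set.univ ×ˢ {R | HasPositiveSurplus fun i => support (R i)}) ×ˢ
      {C | HasPositiveSurplus fun j => support (C j)}) {A | IsRigidCover A X Y} := by
    rintro ⟨⟨B, R⟩, C⟩ ⟨⟨-, hR⟩, hC⟩
    have hrows : (glue ((B, R), C)).toBlock (· ∈ X) (· ∉ Y) = R := by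
      ext i j
      simp [glue]
    have hcols : (glue ((B, R), C))ᵀ.toBlock (· ∈ Y) (· ∉ X) = C := by
      ext j i
      simp [glue]
    refine ⟨fun i j hij => ?_, by rw [hrows]; exact hR, by rw [hcols]; exact hC⟩
    by_contra! hout
    exact hij (by simp [glue, hout.1, hout.2])
  have hle := Set.ncard_le_ncard_of_injOn glue hmaps hglue.injOn
  have hcard : Nat.card (Matrix X Y F) = Nat.card F ^ (#X * #Y) := by
    simp [Matrix, Nat.card_fun, ← pow_mul, mul_comm]
  rwa [Set.ncard_prod, Set.ncard_prod, Set.ncard_univ, hcard] at hle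

theorem pow_mul_pow_mul_pow_le_ncard_isRigidCover [Fintype α] [Fintype β] [Finite F]
    (hα : #X + #Y ≤ Fintype.card α) (hβ : #X + #Y ≤ Fintype.card β) :
    (Nat.card F : ℤ) ^ (#X * #Y) *
        (heavyCount (Nat.card F) (Fintype.card β - #Y) - heavyCount (Nat.card F) #X) ^ #X *
        (heavyCount (Nat.card F) (Fintype.card α - #X) - heavyCount (Nat.card F) #Y) ^ #Y ≤
      {A : Matrix α β F | IsRigidCover A X Y}.ncard := by
  classical
  have hmono := heavyCount_mono (q := Nat.card F) (mod_cast Nat.card_pos)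
  have hrows : Nat.card {j // j ∉ Y} = Fintype.card β - #Y := by
    simp [Nat.card_eq_fintype_card, Fintype.card_subtype_compl]
  have hcols : Nat.card {i // i ∉ X} = Fintype.card α - #X := by
    simp [Nat.card_eq_fintype_card, Fintype.card_subtype_compl]
  have hR := pow_le_ncard_hasPositiveSurplus (F := F) (ι := {j // j ∉ Y}) (k := #X)
    (by omega) X (by simp)
  have hC := pow_le_ncard_hasPositiveSurplus (F := F) (ι := {i // i ∉ X}) (k := #Y)
    (by omega) Y (by simp)
  rw [Nat.card_eq_finsetCard, hrows] at hR
  rw [Nat.card_eq_finsetCard, hcols] at hC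
  refine le_trans ?_
    (Nat.cast_le.2 (card_pow_mul_ncard_mul_ncard_le_ncard_isRigidCover (F := F) X Y))
  push_cast
  have hbase := sub_nonneg.2 (hmono (show #Y ≤ Fintype.card α - #X by omega))
  gcongr

theorem sum_ncard_isRigidCover_le {F : Type*} [Field F] [Finite F] (m n t : ℕ) :
    ∑ p : Finset (Fin m) × Finset (Fin n) with #p.1 + #p.2 = t,
      {A : Matrix (Fin m) (Fin n) F | IsRigidCover A p.1 p.2}.ncard ≤
        {A : Matrix (Fin m) (Fin n) F | coverWt A = t}.ncard := by
  rw [← ncard_biUnion_of_pairwiseDisjoint]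
  · refine Set.ncard_le_ncard (Set.iUnion₂_subset fun p hp A hA => ?_)
    exact hA.coverWt_eq.trans (mem_filter.1 hp).2
  · intro p hp p' hp' hne
    refine Set.disjoint_left.2 fun A hA hA' => hne (Prod.ext_iff.2 ?_)
    have hcard := (mem_filter.1 hp').2.trans (mem_filter.1 hp).2.symm
    exact (hA.eq_or_card_add_card_lt hA'.covers).resolve_right hcard.not_gt

end RigidCover

/-- Lower bound on the size of the cover-metric sphere `F_C(n,m,q,t)`:
`F_C(n,m,q,t) ≥ Σ_{t_x+t_y=t} C(m,t_x)·C(n,t_y)·q^{t_x t_y}·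
(q^{n−t_y} − (q−1)(n−t) − q^{t_x})^{t_x}·(q^{m−t_x} − (q−1)(m−t) − q^{t_y})^{t_y}`. -/
theorem coverSphere_lower_bound {F : Type*} [Field F] [Fintype F] {q m n t : ℕ}
    (hq : Fintype.card F = q) (ht : 0 < t) (htn : t ≤ n) (htm : t ≤ m) :
    (∑ tx ∈ Finset.range (t + 1),
        (m.choose tx : ℤ) * (n.choose (t - tx) : ℤ) * (q : ℤ) ^ (tx * (t - tx)) *
          ((q : ℤ) ^ (n - (t - tx)) - ((q : ℤ) - 1) * ((n : ℤ) - t) - (q : ℤ) ^ tx) ^ tx *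
          ((q : ℤ) ^ (m - tx) - ((q : ℤ) - 1) * ((m : ℤ) - t) - (q : ℤ) ^ (t - tx)) ^ (t - tx)) ≤
      (Nat.card {A : Matrix (Fin m) (Fin n) F | coverWt A = t} : ℤ) := by
  subst hq
  rw [Nat.card_coe_set_eq, ← Nat.card_eq_fintype_card]
  let term (a b : ℕ) : ℤ := (Nat.card F : ℤ) ^ (a * b) *
    (heavyCount (Nat.card F) (n - b) - heavyCount (Nat.card F) a) ^ a *
    (heavyCount (Nat.card F) (m - a) - heavyCount (Nat.card F) b) ^ b
  calc
    _ = ∑ ab ∈ antidiagonal t, (m.choose ab.1 * n.choose ab.2) • term ab.1 ab.2 := by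
      rw [Nat.sum_antidiagonal_eq_sum_range_succ
        (fun a b => (m.choose a * n.choose b) • term a b)]
      refine sum_congr rfl fun a ha => ?_
      have hat : a ≤ t := Nat.lt_succ_iff.1 (mem_range.1 ha)
      simp only [term, heavyCount, nsmul_eq_mul]
      push_cast [hat, show t - a ≤ n by omega, show a ≤ m by omega]
      ring
    _ = ∑ p : Finset (Fin m) × Finset (Fin n) with #p.1 + #p.2 = t, term #p.1 #p.2 := by
      rw [sum_card_card_eq_sum_antidiagonal, Fintype.card_fin, Fintype.card_fin]
    _ ≤ ∑ p : Finset (Fin m) × Finset (Fin n) with #p.1 + #p.2 = t,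
          ({A : Matrix (Fin m) (Fin n) F | IsRigidCover A p.1 p.2}.ncard : ℤ) := by
      refine sum_le_sum fun p hp => ?_
      have hpt := (mem_filter.1 hp).2
      have h := pow_mul_pow_mul_pow_le_ncard_isRigidCover (F := F) (X := p.1) (Y := p.2)
        (by simpa [hpt]) (by simpa [hpt])
      rwa [Fintype.card_fin, Fintype.card_fin] at h
    _ ≤ _ := mod_cast sum_ncard_isRigidCover_le m n t
end

section
/- For every positive integer k, ⌈k/⌈√k⌉ + ⌈√k⌉⌉ ≤ ⌈k + (√k+1)²)/√k⌉ ≤ ⌈2√k⌉ + 3. Consequently, for positive integers k, n, m with ⌈√k⌉ < m, the choice t̂_x = m − ⌈√k⌉ satisfies ⌊t̂_x + n − k/(m−t̂_x)⌋ ≥ m + n − ⌈2√k⌉ − 3. -/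
/-!
Since `√k ≤ ⌈√k⌉ ≤ √k + 1`, writing `k/⌈√k⌉ + ⌈√k⌉` as `(k + ⌈√k⌉²)/⌈√k⌉` and bounding numerator and
denominator separately gives `(k + (√k + 1)²)/√k`. This equals `2√k + 2 + 1/√k`, which is at most
`2√k + 3` because `k ≥ 1`. With `t̂_x = m - ⌈√k⌉` the number under the floor is the integer `m + n`
minus `k/⌈√k⌉ + ⌈√k⌉`, so the floor is `m + n - ⌈k/⌈√k⌉ + ⌈√k⌉⌉`.
-/

theorem div_add_self_le_add_sq_div {K : Type*} [Field K] [LinearOrder K] [IsStrictOrderedRing K]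
    {x s c t : K} (hx : 0 ≤ x) (hs : 0 < s) (hsc : s ≤ c) (hct : c ≤ t) :
    x / c + c ≤ (x + t ^ 2) / s := by
  have hc : 0 < c := hs.trans_le hsc
  calc x / c + c = (x + c ^ 2) / c := by field_simp
    _ ≤ (x + t ^ 2) / s := by gcongr

theorem div_natCeil_sqrt_add_natCeil_sqrt_le {x : ℝ} (hx : 0 < x) :
    x / ⌈√x⌉₊ + ⌈√x⌉₊ ≤ (x + (√x + 1) ^ 2) / √x :=
  div_add_self_le_add_sq_div hx.le (Real.sqrt_pos.2 hx) (Nat.le_ceil _)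
    (Nat.ceil_lt_add_one (Real.sqrt_nonneg x)).le

theorem add_sqrt_add_one_sq_div_sqrt_le {x : ℝ} (hx : 1 ≤ x) :
    (x + (√x + 1) ^ 2) / √x ≤ 2 * √x + 3 := by
  have hs : 1 ≤ √x := Real.one_le_sqrt.2 hx
  have hsq : √x ^ 2 = x := Real.sq_sqrt (zero_le_one.trans hx)
  rw [div_le_iff₀ (zero_lt_one.trans_le hs)]
  linarith

theorem floor_intCast_sub_eq_sub_ceil {K : Type*} [Ring K] [LinearOrder K] [IsOrderedRing K]
    [FloorRing K] (a : ℤ) (y : K) : ⌊(a : K) - y⌋ = a - ⌈y⌉ := by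
  rw [sub_eq_add_neg, Int.floor_intCast_add, Int.floor_neg, ← sub_eq_add_neg]

theorem prange_success_lower_bound_general {x : ℝ} (hx : 1 ≤ x) (n m : ℤ) :
    ⌈x / ⌈√x⌉₊ + ⌈√x⌉₊⌉ ≤ ⌈(x + (√x + 1) ^ 2) / √x⌉ ∧
    ⌈(x + (√x + 1) ^ 2) / √x⌉ ≤ ⌈2 * √x⌉ + 3 ∧
    m + n - ⌈2 * √x⌉ - 3 ≤ ⌊(m - ⌈√x⌉₊ : ℝ) + n - x / (m - (m - ⌈√x⌉₊))⌋ := by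
  have hfirst : ⌈x / ⌈√x⌉₊ + ⌈√x⌉₊⌉ ≤ ⌈(x + (√x + 1) ^ 2) / √x⌉ :=
    Int.ceil_le_ceil (div_natCeil_sqrt_add_natCeil_sqrt_le (zero_lt_one.trans_le hx))
  have hsecond : ⌈(x + (√x + 1) ^ 2) / √x⌉ ≤ ⌈2 * √x⌉ + 3 :=
    (Int.ceil_le_ceil (add_sqrt_add_one_sq_div_sqrt_le hx)).trans_eq (Int.ceil_add_ofNat _ 3)
  refine ⟨hfirst, hsecond, ?_⟩
  calc m + n - ⌈2 * √x⌉ - 3 ≤ m + n - ⌈x / ⌈√x⌉₊ + ⌈√x⌉₊⌉ := by linarith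
    _ = ⌊((m + n : ℤ) : ℝ) - (x / ⌈√x⌉₊ + ⌈√x⌉₊)⌋ := (floor_intCast_sub_eq_sub_ceil _ _).symm
    _ = ⌊(m - ⌈√x⌉₊ : ℝ) + n - x / (m - (m - ⌈√x⌉₊))⌋ := by
      rw [sub_sub_cancel]
      congr 1
      push_cast
      ring

/-- Arithmetic estimate for the lower bound on the success probability of the
Prange-like decoder: `⌈k/⌈√k⌉ + ⌈√k⌉⌉ ≤ ⌈(k + (√k+1)²)/√k⌉ ≤ ⌈2√k⌉ + 3`;
consequently, for `⌈√k⌉ < m`, the choice `t̂_x = m − ⌈√k⌉` satisfies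
`⌊t̂_x + n − k/(m−t̂_x)⌋ ≥ m + n − ⌈2√k⌉ − 3`. -/
theorem prange_success_lower_bound (k n m : ℕ) (hk : 0 < k)
    (hm : ⌈Real.sqrt k⌉₊ < m) :
    ⌈(k : ℝ) / (⌈Real.sqrt k⌉₊ : ℝ) + (⌈Real.sqrt k⌉₊ : ℝ)⌉ ≤
      ⌈((k : ℝ) + (Real.sqrt k + 1) ^ 2) / Real.sqrt k⌉ ∧
    ⌈((k : ℝ) + (Real.sqrt k + 1) ^ 2) / Real.sqrt k⌉ ≤ ⌈2 * Real.sqrt k⌉ + 3 ∧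
    (m : ℤ) + n - ⌈2 * Real.sqrt k⌉ - 3 ≤
      ⌊((m - ⌈Real.sqrt k⌉₊ : ℕ) : ℝ) + n -
        (k : ℝ) / ((m - (m - ⌈Real.sqrt k⌉₊) : ℕ) : ℝ)⌋ := by
  simpa only [Nat.cast_sub hm.le, Nat.cast_sub (Nat.sub_le _ _), Int.cast_natCast] using
    prange_success_lower_bound_general (Nat.one_le_cast.2 hk) n m
end
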